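/- Let u, U, Φ, Φ* be smooth functions on ℝ³ (coordinates (t,x,y)), with u, U real-valued and Φ, Φ* complex-valued, satisfying: ∂_x U = ∂_y u; the Jost equations −∂_yΦ + ∂_x²Φ + uΦ = 0 and 4∂_tΦ + 4∂_x³Φ + 6u∂_xΦ + 3(∂_xu)Φ + 3UΦ = 0; and the dual Jost equations ∂_yΦ* + ∂_x²Φ* + uΦ* = 0 and 4∂_tΦ* + 4∂_x³Φ* + 6u∂_xΦ* + 3(∂_xu)Φ* − 3UΦ* = 0. Then w := ΦΦ* satisfies the adjoint linearized KP-II equation ∂_x(4∂_tw + 6u∂_xw + ∂_x³w) + 3∂_y²w = 0, and v := ∂_x(ΦΦ*) satisfies the linearized KP-II equation ∂_x(4∂_tv + 6∂_x(uv) + ∂_x³v) + 3∂_y²v = 0. -/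

import Mathlib

noncomputable def pt {E : Type*} [NormedAddCommGroup E] [NormedSpace ℝ E]
    (f : ℝ → ℝ → ℝ → E) : ℝ → ℝ → ℝ → E :=
  fun t x y => deriv (fun s => f s x y) t

noncomputable def px {E : Type*} [NormedAddCommGroup E] [NormedSpace ℝ E]
    (f : ℝ → ℝ → ℝ → E) : ℝ → ℝ → ℝ → E :=
  fun t x y => deriv (fun s => f t s y) x

noncomputable def py {E : Type*} [NormedAddCommGroup E] [NormedSpace ℝ E]
    (f : ℝ → ℝ → ℝ → E) : ℝ → ℝ → ℝ → E :=
  fun t x y => deriv (fun s => f t x s) y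

/-!
Smooth functions form a commutative ring with commuting derivations `∂t`, `∂x`, `∂y`, and the
theorem is an identity in such a ring. For `w = ΦΦ*` and the Wronskian `W = Φ_x Φ* - Φ Φ*_x`, the
equations `LΦ = 0` and `L*Φ* = 0` give `w_y = W_x`, and together with `BΦ = 0` and `B*Φ* = 0`,
where the terms in `U` cancel, they give `4 w_t + 6 u w_x + w_xxx + 3 W_y = 0`. Applying `∂x` to
the latter and replacing `W_xy` by `w_yy` gives the adjoint linearized equation for `w`; applying
`∂x` once more gives the linearized equation for `w_x`.
-/

open scoped ContDiff

section DifferentialAlgebra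

variable {k R : Type*} [CommRing k] [CommRing R] [Algebra k R]

theorem derivation_ofNat_mul (D : Derivation k R R) (n : ℕ) [n.AtLeastTwo] (a : R) :
    D (ofNat(n) * a) = ofNat(n) * D a := by
  simpa using D.map_smul_of_tower (OfNat.ofNat n : ℕ) a

variable (dt dx dy : Derivation k R R)

/-- A solution `φ` of `Lφ = Bφ = 0` and a solution `ψ` of `L*ψ = B*ψ = 0` for the KP-II Lax pair
with potential `u`, over a differential ring; `U` stands for `∂x⁻¹∂y u`. -/
structure IsJostPair (u U φ ψ : R) : Prop where
  dx_eq_dy : dx U = dy u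
  jost_y : -dy φ + dx (dx φ) + u * φ = 0
  jost_t : 4 * dt φ + 4 * dx (dx (dx φ)) + 6 * u * dx φ + 3 * dx u * φ + 3 * U * φ = 0
  dual_y : dy ψ + dx (dx ψ) + u * ψ = 0
  dual_t : 4 * dt ψ + 4 * dx (dx (dx ψ)) + 6 * u * dx ψ + 3 * dx u * ψ - 3 * U * ψ = 0

/-- The linearization `v ↦ ∂x (4 v_t + 6 (u v)_x + v_xxx) + 3 v_yy` of the KP-II operator at `u`. -/
def linearizedKPII (u v : R) : R :=
  dx (4 * dt v + 6 * dx (u * v) + dx (dx (dx v))) + 3 * dy (dy v)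

/-- The formal adjoint `w ↦ ∂x (4 w_t + 6 u w_x + w_xxx) + 3 w_yy` of `linearizedKPII`. -/
def adjointLinearizedKPII (u w : R) : R :=
  dx (4 * dt w + 6 * u * dx w + dx (dx (dx w))) + 3 * dy (dy w)

/-- The Wronskian `φ_x ψ - φ ψ_x` in the variable `x`. -/
def wronskian (φ ψ : R) : R := dx φ * ψ - φ * dx ψ

variable {dt dx dy}

theorem linearizedKPII_dx (htx : Function.Commute dt dx) (hyx : Function.Commute dy dx) (u w : R) :
    linearizedKPII dt dx dy u (dx w) = dx (adjointLinearizedKPII dt dx dy u w) := by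
  simp only [linearizedKPII, adjointLinearizedKPII, map_add, derivation_ofNat_mul, mul_assoc,
    htx.eq, hyx.eq]

theorem dy_mul_eq_dx_wronskian {u φ ψ : R} (hφ : -dy φ + dx (dx φ) + u * φ = 0)
    (hψ : dy ψ + dx (dx ψ) + u * ψ = 0) : dy (φ * ψ) = dx (wronskian dx φ ψ) := by
  simp only [wronskian, map_sub, Derivation.leibniz, smul_eq_mul]
  linear_combination φ * hψ - ψ * hφ

namespace IsJostPair

variable {u U φ ψ : R}

theorem conservation_law (h : IsJostPair dt dx dy u U φ ψ) (hyx : Function.Commute dy dx) :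
    4 * dt (φ * ψ) + 6 * u * dx (φ * ψ) + dx (dx (dx (φ * ψ))) + 3 * dy (wronskian dx φ ψ) = 0 := by
  have jost_xy : -dy (dx φ) + dx (dx (dx φ)) + dx (u * φ) = 0 := by
    simpa [hyx.eq] using congrArg dx h.jost_y
  have dual_xy : dy (dx ψ) + dx (dx (dx ψ)) + dx (u * ψ) = 0 := by
    simpa [hyx.eq] using congrArg dx h.dual_y
  simp only [wronskian, map_add, map_sub, Derivation.leibniz, smul_eq_mul] at jost_xy dual_xy ⊢
  linear_combination ψ * h.jost_t + φ * h.dual_t - 3 * ψ * jost_xy - 3 * φ * dual_xy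
    + 3 * dx ψ * h.jost_y + 3 * dx φ * h.dual_y

theorem adjointLinearizedKPII_mul (h : IsJostPair dt dx dy u U φ ψ) (hyx : Function.Commute dy dx) :
    adjointLinearizedKPII dt dx dy u (φ * ψ) = 0 :=
  calc adjointLinearizedKPII dt dx dy u (φ * ψ)
    _ = dx (4 * dt (φ * ψ) + 6 * u * dx (φ * ψ) + dx (dx (dx (φ * ψ)))
          + 3 * dy (wronskian dx φ ψ)) := by
      rw [adjointLinearizedKPII, dy_mul_eq_dx_wronskian h.jost_y h.dual_y, hyx.eq,
        map_add dx (_ + _) (3 * _), derivation_ofNat_mul]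
    _ = 0 := by rw [h.conservation_law hyx, map_zero]

theorem linearizedKPII_dx_mul (h : IsJostPair dt dx dy u U φ ψ) (htx : Function.Commute dt dx)
    (hyx : Function.Commute dy dx) : linearizedKPII dt dx dy u (dx (φ * ψ)) = 0 := by
  rw [linearizedKPII_dx htx hyx, h.adjointLinearizedKPII_mul hyx, map_zero]

end IsJostPair

end DifferentialAlgebra

section DirectionalDerivative

variable {E : Type*} [NormedAddCommGroup E] [NormedSpace ℝ E] {f g : ℝ → ℝ → ℝ → E}

/-- The derivative in the direction `v` of a curried function of three real variables. -/
noncomputable def dirDeriv (v : ℝ × ℝ × ℝ) (f : ℝ → ℝ → ℝ → E) : ℝ → ℝ → ℝ → E :=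
  fun t x y => fderiv ℝ ↿f (t, x, y) v

theorem pt_eq_dirDeriv (hf : Differentiable ℝ ↿f) : pt f = dirDeriv (1, 0, 0) f := by
  funext t x y
  have hline : HasDerivAt (fun s : ℝ => (s, x, y)) (1, 0, 0) t :=
    (hasDerivAt_id t).prodMk (hasDerivAt_const t (x, y))
  exact ((hf (t, x, y)).hasFDerivAt.comp_hasDerivAt t hline).deriv

theorem px_eq_dirDeriv (hf : Differentiable ℝ ↿f) : px f = dirDeriv (0, 1, 0) f := by
  funext t x y
  have hline : HasDerivAt (fun s : ℝ => (t, s, y)) (0, 1, 0) x :=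
    (hasDerivAt_const x t).prodMk ((hasDerivAt_id x).prodMk (hasDerivAt_const x y))
  exact ((hf (t, x, y)).hasFDerivAt.comp_hasDerivAt x hline).deriv

theorem py_eq_dirDeriv (hf : Differentiable ℝ ↿f) : py f = dirDeriv (0, 0, 1) f := by
  funext t x y
  have hline : HasDerivAt (fun s : ℝ => (t, x, s)) (0, 0, 1) y :=
    (hasDerivAt_const y t).prodMk ((hasDerivAt_const y x).prodMk (hasDerivAt_id y))
  exact ((hf (t, x, y)).hasFDerivAt.comp_hasDerivAt y hline).deriv

theorem contDiff_dirDeriv {m n : ℕ∞ω} (hf : ContDiff ℝ n ↿f) (hmn : m + 1 ≤ n)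
    (v : ℝ × ℝ × ℝ) : ContDiff ℝ m ↿(dirDeriv v f) :=
  (hf.fderiv_right hmn).clm_apply contDiff_const

theorem dirDeriv_comm (hf : ContDiff ℝ 2 ↿f) (v w : ℝ × ℝ × ℝ) :
    dirDeriv v (dirDeriv w f) = dirDeriv w (dirDeriv v f) := by
  have second_deriv (a b : ℝ × ℝ × ℝ) (t x y : ℝ) :
      dirDeriv a (dirDeriv b f) t x y = fderiv ℝ (fderiv ℝ ↿f) (t, x, y) a b := by
    have hd : Differentiable ℝ (fderiv ℝ ↿f) :=
      (hf.fderiv_right (m := 1) (by norm_num)).differentiable (by norm_num)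
    have h := ((hd (t, x, y)).hasFDerivAt.clm_apply (hasFDerivAt_const b (t, x, y))).fderiv
    change fderiv ℝ (fun p => fderiv ℝ ↿f p b) (t, x, y) a = _
    rw [h]
    simp
  funext t x y
  rw [second_deriv, second_deriv]
  exact hf.contDiffAt.isSymmSndFDerivAt (by simp) v w

theorem dirDeriv_add (hf : Differentiable ℝ ↿f) (hg : Differentiable ℝ ↿g) (v : ℝ × ℝ × ℝ) :
    dirDeriv v (f + g) = dirDeriv v f + dirDeriv v g := by
  funext t x y
  exact congrArg (· v) (fderiv_add (hf (t, x, y)) (hg (t, x, y)))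

theorem dirDeriv_const_smul (hf : Differentiable ℝ ↿f) (c : ℝ) (v : ℝ × ℝ × ℝ) :
    dirDeriv v (c • f) = c • dirDeriv v f := by
  funext t x y
  exact congrArg (· v) (fderiv_const_smul (hf (t, x, y)) c)

theorem dirDeriv_mul {A : Type*} [NormedCommRing A] [NormedAlgebra ℝ A] {f g : ℝ → ℝ → ℝ → A}
    (hf : Differentiable ℝ ↿f) (hg : Differentiable ℝ ↿g) (v : ℝ × ℝ × ℝ) :
    dirDeriv v (f * g) = f * dirDeriv v g + g * dirDeriv v f := by
  funext t x y
  exact congrArg (· v) (fderiv_mul (hf (t, x, y)) (hg (t, x, y)))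

theorem px_clm_comp {F : Type*} [NormedAddCommGroup F] [NormedSpace ℝ F] (L : E →L[ℝ] F)
    (hf : Differentiable ℝ ↿f) :
    px (fun t x y => L (f t x y)) = fun t x y => L (px f t x y) := by
  funext t x y
  have hx : DifferentiableAt ℝ (fun s => f t s y) x :=
    hf.comp (f := fun s => (t, s, y)) (by fun_prop) x
  exact (L.hasFDerivAt.comp_hasDerivAt x hx.hasDerivAt).deriv

theorem py_clm_comp {F : Type*} [NormedAddCommGroup F] [NormedSpace ℝ F] (L : E →L[ℝ] F)
    (hf : Differentiable ℝ ↿f) :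
    py (fun t x y => L (f t x y)) = fun t x y => L (py f t x y) := by
  funext t x y
  have hy : DifferentiableAt ℝ (fun s => f t x s) y :=
    hf.comp (f := fun s => (t, x, s)) (by fun_prop) y
  exact (L.hasFDerivAt.comp_hasDerivAt y hy.hasDerivAt).deriv

theorem px_ofReal {u : ℝ → ℝ → ℝ → ℝ} (hu : Differentiable ℝ ↿u) :
    px (fun t x y => (u t x y : ℂ)) = fun t x y => ((px u t x y : ℝ) : ℂ) :=
  px_clm_comp Complex.ofRealCLM hu

theorem py_ofReal {u : ℝ → ℝ → ℝ → ℝ} (hu : Differentiable ℝ ↿u) :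
    py (fun t x y => (u t x y : ℂ)) = fun t x y => ((py u t x y : ℝ) : ℂ) :=
  py_clm_comp Complex.ofRealCLM hu

end DirectionalDerivative

section SmoothFunctions

variable (A : Type*) [NormedCommRing A] [NormedAlgebra ℝ A]

/-- The algebra of jointly smooth functions of `(t, x, y)`, in curried form. -/
def smoothFunctions : Subalgebra ℝ (ℝ → ℝ → ℝ → A) where
  carrier := {f | ContDiff ℝ ∞ ↿f}
  add_mem' {f g} (hf : ContDiff ℝ ∞ ↿f) (hg : ContDiff ℝ ∞ ↿g) := hf.add hg
  mul_mem' {f g} (hf : ContDiff ℝ ∞ ↿f) (hg : ContDiff ℝ ∞ ↿g) := hf.mul hg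
  algebraMap_mem' c := show ContDiff ℝ ∞ fun _ : ℝ × ℝ × ℝ => algebraMap ℝ A c from contDiff_const

variable {A}

theorem mem_smoothFunctions {f : ℝ → ℝ → ℝ → A} : f ∈ smoothFunctions A ↔ ContDiff ℝ ∞ ↿f :=
  Iff.rfl

theorem differentiable_smoothFunctions (f : smoothFunctions A) :
    Differentiable ℝ ↿(f : ℝ → ℝ → ℝ → A) :=
  (mem_smoothFunctions.mp f.2).differentiable (by simp)

/-- An operator `D` that agrees with the derivative in the direction `v`, as a derivation of the
algebra of smooth functions. The operator is a parameter so that `↑(smoothDerivation h f) = D f`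
holds definitionally for `pt`, `px` and `py`. -/
noncomputable def smoothDerivation {D : (ℝ → ℝ → ℝ → A) → ℝ → ℝ → ℝ → A} {v : ℝ × ℝ × ℝ}
    (h : ∀ {f}, Differentiable ℝ ↿f → D f = dirDeriv v f) :
    Derivation ℝ (smoothFunctions A) (smoothFunctions A) :=
  have apply_eq (f : smoothFunctions A) : D f = dirDeriv v f :=
    h (differentiable_smoothFunctions f)
  Derivation.mk'
    { toFun f := ⟨D f, apply_eq f ▸
        mem_smoothFunctions.mpr (contDiff_dirDeriv (mem_smoothFunctions.mp f.2) (by simp) v)⟩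
      map_add' f g := Subtype.ext <| show D ↑(f + g) = D f + D g by
        simp only [apply_eq]
        exact dirDeriv_add (differentiable_smoothFunctions f) (differentiable_smoothFunctions g) v
      map_smul' c f := Subtype.ext <| show D ↑(c • f) = c • D f by
        simp only [apply_eq]
        exact dirDeriv_const_smul (differentiable_smoothFunctions f) c v }
    fun f g => Subtype.ext <| show D ↑(f * g) = f * D g + g * D f by
      simp only [apply_eq]
      exact dirDeriv_mul (differentiable_smoothFunctions f) (differentiable_smoothFunctions g) v

theorem commute_smoothDerivation {D₁ D₂ : (ℝ → ℝ → ℝ → A) → ℝ → ℝ → ℝ → A}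
    {v₁ v₂ : ℝ × ℝ × ℝ} (h₁ : ∀ {f}, Differentiable ℝ ↿f → D₁ f = dirDeriv v₁ f)
    (h₂ : ∀ {f}, Differentiable ℝ ↿f → D₂ f = dirDeriv v₂ f) :
    Function.Commute (smoothDerivation h₁) (smoothDerivation h₂) := fun f =>
  Subtype.ext <| by
    have hf : ContDiff ℝ 2 ↿(f : ℝ → ℝ → ℝ → A) :=
      (mem_smoothFunctions.mp f.2).of_le (by norm_cast)
    calc D₁ (D₂ f)
      _ = dirDeriv v₁ (dirDeriv v₂ f) := by
        rw [← h₂ (differentiable_smoothFunctions f)]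
        exact h₁ (differentiable_smoothFunctions (smoothDerivation h₂ f))
      _ = dirDeriv v₂ (dirDeriv v₁ f) := dirDeriv_comm hf v₁ v₂
      _ = D₂ (D₁ f) := by
        rw [← h₁ (differentiable_smoothFunctions f)]
        exact (h₂ (differentiable_smoothFunctions (smoothDerivation h₁ f))).symm

end SmoothFunctions

theorem jost_product_solves_linearized_KPII_general {A : Type*} [NormedCommRing A]
    [NormedAlgebra ℝ A] (u U Φ Φs : ℝ → ℝ → ℝ → A)
    (hu : ContDiff ℝ ∞ ↿u) (hU : ContDiff ℝ ∞ ↿U)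
    (hΦ : ContDiff ℝ ∞ ↿Φ) (hΦs : ContDiff ℝ ∞ ↿Φs)
    (hUx : ∀ t x y, px U t x y = py u t x y)
    (hL : ∀ t x y, -py Φ t x y + px (px Φ) t x y + u t x y * Φ t x y = 0)
    (hB : ∀ t x y, 4 * pt Φ t x y + 4 * px (px (px Φ)) t x y
        + 6 * u t x y * px Φ t x y + 3 * px u t x y * Φ t x y
        + 3 * U t x y * Φ t x y = 0)
    (hLs : ∀ t x y, py Φs t x y + px (px Φs) t x y + u t x y * Φs t x y = 0)
    (hBs : ∀ t x y, 4 * pt Φs t x y + 4 * px (px (px Φs)) t x y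
        + 6 * u t x y * px Φs t x y + 3 * px u t x y * Φs t x y
        - 3 * U t x y * Φs t x y = 0) :
    (∀ t x y,
        px (fun a b c => 4 * pt (fun d e f => Φ d e f * Φs d e f) a b c
              + 6 * u a b c * px (fun d e f => Φ d e f * Φs d e f) a b c
              + px (px (px fun d e f => Φ d e f * Φs d e f)) a b c) t x y
          + 3 * py (py fun d e f => Φ d e f * Φs d e f) t x y = 0)
    ∧ (∀ t x y,
        px (fun a b c => 4 * pt (px fun d e f => Φ d e f * Φs d e f) a b c
              + 6 * px (fun d e f => u d e f
                  * px (fun d' e' f' => Φ d' e' f' * Φs d' e' f') d e f) a b c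
              + px (px (px (px fun d e f => Φ d e f * Φs d e f))) a b c) t x y
          + 3 * py (py (px fun d e f => Φ d e f * Φs d e f)) t x y = 0) := by
  have ext_zero {F : smoothFunctions A} (hF : ∀ t x y, (F : ℝ → ℝ → ℝ → A) t x y = 0) : F = 0 :=
    Subtype.ext <| by funext t x y; exact hF t x y
  have pair : IsJostPair (smoothDerivation pt_eq_dirDeriv)
      (smoothDerivation px_eq_dirDeriv) (smoothDerivation py_eq_dirDeriv)
      (⟨u, hu⟩ : smoothFunctions A) ⟨U, hU⟩ ⟨Φ, hΦ⟩ ⟨Φs, hΦs⟩ :=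
    { dx_eq_dy := Subtype.ext <| by funext t x y; exact hUx t x y
      jost_y := ext_zero hL
      jost_t := ext_zero hB
      dual_y := ext_zero hLs
      dual_t := ext_zero hBs }
  have hyx := commute_smoothDerivation (A := A) py_eq_dirDeriv px_eq_dirDeriv
  have htx := commute_smoothDerivation (A := A) pt_eq_dirDeriv px_eq_dirDeriv
  have adjoint := congrArg Subtype.val (pair.adjointLinearizedKPII_mul hyx)
  have linearized := congrArg Subtype.val (pair.linearizedKPII_dx_mul htx hyx)
  exact ⟨fun t x y => congrFun (congrFun (congrFun adjoint t) x) y,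
    fun t x y => congrFun (congrFun (congrFun linearized t) x) y⟩

/-- products of Jost and dual Jost solutions solve the
(adjoint) linearized KP-II equation. -/
theorem jost_product_solves_linearized_KPII
    (u U : ℝ → ℝ → ℝ → ℝ) (Φ Φs : ℝ → ℝ → ℝ → ℂ)
    (hu : ContDiff ℝ (⊤ : ℕ∞) fun p : ℝ × ℝ × ℝ => u p.1 p.2.1 p.2.2)
    (hU : ContDiff ℝ (⊤ : ℕ∞) fun p : ℝ × ℝ × ℝ => U p.1 p.2.1 p.2.2)
    (hΦ : ContDiff ℝ (⊤ : ℕ∞) fun p : ℝ × ℝ × ℝ => Φ p.1 p.2.1 p.2.2)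
    (hΦs : ContDiff ℝ (⊤ : ℕ∞) fun p : ℝ × ℝ × ℝ => Φs p.1 p.2.1 p.2.2)
    (hUx : ∀ t x y, px U t x y = py u t x y)
    (hL : ∀ t x y, -py Φ t x y + px (px Φ) t x y + (u t x y : ℂ) * Φ t x y = 0)
    (hB : ∀ t x y, 4 * pt Φ t x y + 4 * px (px (px Φ)) t x y
        + 6 * (u t x y : ℂ) * px Φ t x y + 3 * ((px u t x y : ℝ) : ℂ) * Φ t x y
        + 3 * (U t x y : ℂ) * Φ t x y = 0)
    (hLs : ∀ t x y, py Φs t x y + px (px Φs) t x y + (u t x y : ℂ) * Φs t x y = 0)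
    (hBs : ∀ t x y, 4 * pt Φs t x y + 4 * px (px (px Φs)) t x y
        + 6 * (u t x y : ℂ) * px Φs t x y + 3 * ((px u t x y : ℝ) : ℂ) * Φs t x y
        - 3 * (U t x y : ℂ) * Φs t x y = 0) :
    (∀ t x y,
        px (fun a b c => 4 * pt (fun d e f => Φ d e f * Φs d e f) a b c
              + 6 * (u a b c : ℂ) * px (fun d e f => Φ d e f * Φs d e f) a b c
              + px (px (px fun d e f => Φ d e f * Φs d e f)) a b c) t x y
          + 3 * py (py fun d e f => Φ d e f * Φs d e f) t x y = 0)
    ∧ (∀ t x y,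
        px (fun a b c => 4 * pt (px fun d e f => Φ d e f * Φs d e f) a b c
              + 6 * px (fun d e f => (u d e f : ℂ)
                  * px (fun d' e' f' => Φ d' e' f' * Φs d' e' f') d e f) a b c
              + px (px (px (px fun d e f => Φ d e f * Φs d e f))) a b c) t x y
          + 3 * py (py (px fun d e f => Φ d e f * Φs d e f)) t x y = 0) := by
  have hu' := hu.differentiable (by simp)
  have hU' := hU.differentiable (by simp)
  exact jost_product_solves_linearized_KPII_general (fun t x y => (u t x y : ℂ))
    (fun t x y => (U t x y : ℂ)) Φ Φs (Complex.ofRealCLM.contDiff.comp hu)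
    (Complex.ofRealCLM.contDiff.comp hU) hΦ hΦs (by simpa [px_ofReal hU', py_ofReal hu'] using hUx)
    hL (by simpa only [px_ofReal hu'] using hB) hLs (by simpa only [px_ofReal hu'] using hBs)
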